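/- arXiv:2306.16422 — 2 statements merged into one kernel-verified Lean document; each statement's English description precedes it below -/
import Mathlib

section
/- For every ε > 0 there exists a single neural network NN = (NN_a, NN_y) : ℝ^{n_x} → ℝ^{1+n_y} (a finite composition of affine maps and a fixed continuous non-polynomial activation applied componentwise) such that for all x ∈ K_x: (i) (NN_a(x), NN_y(x)) ∈ Γ(x), i.e. NN_a(x) ≥ a_low, NN_y(x) ∈ K_y, and I_s(x, NN_a(x), NN_y(x)) ≥ 0 for all s ∈ S; and (ii) f(x, NN_a(x), NN_y(x)) − V(x) ≤ ε. -/
/-- Feedforward neural networks `ℝ^m → ℝ^n` with activation `σ`: finite alternating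
compositions `A_l ∘ σ ∘ A_{l-1} ∘ ⋯ ∘ σ ∘ A_0` of affine maps and the componentwise
activation. -/
inductive IsNN (σ : ℝ → ℝ) : (m n : ℕ) → ((Fin m → ℝ) → (Fin n → ℝ)) → Prop
  | affine {m n : ℕ} (A : Fin n → Fin m → ℝ) (b : Fin n → ℝ) :
      IsNN σ m n (fun (x : Fin m → ℝ) (i : Fin n) => (∑ j, A i j * x j) + b i)
  | comp {m k n : ℕ} (A : Fin n → Fin k → ℝ) (b : Fin n → ℝ)
      {F : (Fin m → ℝ) → (Fin k → ℝ)} (hF : IsNN σ m k F) :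
      IsNN σ m n (fun (x : Fin m → ℝ) (i : Fin n) => (∑ j, A i j * σ (F x j)) + b i)

/-- Feasible set `Γ(x)` of the convex semi-infinite program. -/
def GammaFull {X Y S : Type*} (Ky : Set Y) (aLow : ℝ)
    (I : S → X → ℝ → Y → ℝ) (x : X) : Set (ℝ × Y) :=
  {p | aLow ≤ p.1 ∧ p.2 ∈ Ky ∧ ∀ s, 0 ≤ I s x p.1 p.2}

/-- Value `V(x)` of the convex semi-infinite program. -/
noncomputable def VFull {X Y S : Type*} (Ky : Set Y) (aLow : ℝ)
    (f : X → ℝ → Y → ℝ) (I : S → X → ℝ → Y → ℝ) (x : X) : ℝ :=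
  sInf ((fun p : ℝ × Y => f x p.1 p.2) '' GammaFull Ky aLow I x)

section
open Filter Topology MeasureTheory

lemma uat_deriv {X : Type*} [TopologicalSpace X] [CompactSpace X]
    (V : Submodule ℝ C(X, ℝ)) (hV : IsClosed (V : Set C(X, ℝ))) (L P : C(X, ℝ))
    (φ φ' : C(ℝ, ℝ)) (hφ : ∀ t, HasDerivAt φ (φ' t) t) (b : ℝ)
    (h : ∀ c : ℝ, P * φ.comp (c • L + ContinuousMap.const X b) ∈ V) (c : ℝ) :
    P * L * φ'.comp (c • L + ContinuousMap.const X b) ∈ V := by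
  set g : ℝ → C(X, ℝ) := fun c => P * L * φ'.comp (c • L + ContinuousMap.const X b) with hg
  set G : ℝ → C(X, ℝ) := fun c => P * φ.comp (c • L + ContinuousMap.const X b) with hG
  have hgc : Continuous g := by
    refine continuous_const.mul ((ContinuousMap.continuous_postcomp φ').comp ?_)
    fun_prop
  have key : G = fun c => G 0 + ∫ s in (0:ℝ)..c, g s := by
    funext c
    ext x
    have h1 : (∫ s in (0:ℝ)..c, g s) x = ∫ s in (0:ℝ)..c, g s x :=
      ((ContinuousMap.evalCLM ℝ x).intervalIntegral_comp_comm (hgc.intervalIntegrable _ _)).symm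
    have h2 : ∫ s in (0:ℝ)..c, g s x = G c x - G 0 x := by
      refine intervalIntegral.integral_eq_sub_of_hasDerivAt (f := fun s => G s x) ?_ ?_
      · intro s _
        have h3 : HasDerivAt (fun s : ℝ => s * L x + b) (L x) s := by
          simpa using ((hasDerivAt_id s).mul_const (L x)).add_const b
        have h4 := ((hφ (s * L x + b)).comp s h3).const_mul (P x)
        refine HasDerivAt.congr_deriv (f := fun s => G s x) h4 ?_
        change P x * (φ' (s * L x + b) * L x) = P x * L x * φ' (s * L x + b)
        ring
      · have : Continuous fun s => g s x := (ContinuousMap.evalCLM ℝ x).continuous.comp hgc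
        exact this.intervalIntegrable _ _
    simp only [ContinuousMap.add_apply, h1, h2]; ring
  have hd : HasDerivAt G (g c) c := by
    rw [key]
    exact (hgc.integral_hasStrictDerivAt 0 c).hasDerivAt.const_add _
  have := hd.tendsto_slope
  refine hV.mem_of_tendsto this (Eventually.of_forall fun y => ?_)
  rw [slope_def_module]
  exact V.smul_mem _ (V.sub_mem (h _) (h _))

lemma uat_iter {X : Type*} [TopologicalSpace X] [CompactSpace X]
    (V : Submodule ℝ C(X, ℝ)) (hV : IsClosed (V : Set C(X, ℝ))) (L : C(X, ℝ))
    (ψ : ℝ → ℝ) (hψ : ContDiff ℝ (⊤ : ℕ∞) ψ)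
    (h : ∀ c b : ℝ, (⟨ψ, hψ.continuous⟩ : C(ℝ, ℝ)).comp (c • L + ContinuousMap.const X b) ∈ V)
    (k : ℕ) : ∀ (hk : Continuous (iteratedDeriv k ψ)) (c b : ℝ),
    L ^ k * (⟨iteratedDeriv k ψ, hk⟩ : C(ℝ, ℝ)).comp (c • L + ContinuousMap.const X b) ∈ V := by
  induction k with
  | zero => intro hk c b; simpa using h c b
  | succ k ih =>
    intro hk c b
    have hk' : Continuous (iteratedDeriv k ψ) :=
      hψ.continuous_iteratedDeriv k (by exact_mod_cast le_top)
    rw [pow_succ]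
    refine uat_deriv V hV L (L ^ k) ⟨iteratedDeriv k ψ, hk'⟩ ⟨iteratedDeriv (k+1) ψ, hk⟩ ?_ b
      (fun c => ih hk' c b) c
    intro t
    have hd : Differentiable ℝ (iteratedDeriv k ψ) :=
      hψ.differentiable_iteratedDeriv k (by exact_mod_cast WithTop.coe_lt_top _)
    simpa [iteratedDeriv_succ] using (hd t).hasDerivAt

lemma poly_of_iteratedDeriv (k : ℕ) : ∀ (ψ : ℝ → ℝ), ContDiff ℝ (⊤ : ℕ∞) ψ →
    (∀ t, iteratedDeriv k ψ t = 0) →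
    ∃ a : ℕ → ℝ, ∀ t, ψ t = ∑ i ∈ Finset.range k, a i * t ^ i := by
  induction k with
  | zero => intro ψ _ h; exact ⟨0, fun t => by simpa using h t⟩
  | succ k ih =>
    intro ψ hψ h
    have hd : ContDiff ℝ (⊤ : ℕ∞) (deriv ψ) := by
      exact ((contDiff_infty_iff_deriv (𝕜 := ℝ)).1 hψ).2
    obtain ⟨a, ha⟩ := ih (deriv ψ) hd (fun t => by rw [← iteratedDeriv_succ']; exact h t)
    have hD : ∀ t, HasDerivAt (fun t => ψ t - ∑ i ∈ Finset.range k, a i / (i + 1) * t ^ (i+1)) 0 t := by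
      intro t
      have h1 : HasDerivAt ψ (∑ i ∈ Finset.range k, a i * t ^ i) t := by
        rw [← ha]; exact (hψ.differentiable (by simp) t).hasDerivAt
      have h2 : HasDerivAt (fun t => ∑ i ∈ Finset.range k, a i / (i + 1) * t ^ (i+1))
          (∑ i ∈ Finset.range k, a i * t ^ i) t := by
        apply HasDerivAt.fun_sum
        intro i _
        have := (hasDerivAt_pow (i+1) t).const_mul (a i / (i + 1))
        refine this.congr_deriv ?_
        have : (i:ℝ) + 1 ≠ 0 := by positivity
        rw [Nat.add_sub_cancel]
        push_cast
        field_simp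
      exact (h1.fun_sub h2).congr_deriv (sub_self _)
    have hconst := is_const_of_deriv_eq_zero (fun t => (hD t).differentiableAt)
      (fun t => (hD t).deriv)
    refine ⟨fun i => if i = 0 then ψ 0 else a (i-1) / ((i-1 : ℕ) + 1), fun t => ?_⟩
    have := hconst t 0
    simp only [ne_eq, Nat.add_eq_zero_iff, one_ne_zero, and_false, not_false_eq_true, zero_pow, mul_zero, Finset.sum_const_zero, sub_zero] at this
    rw [Finset.sum_range_succ']
    simp
    linarith

lemma poly_limit {ι : Type*} {l : Filter ι} [l.NeBot] (k : ℕ) (σ : ℝ → ℝ) (ψ : ι → ℝ → ℝ)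
    (hlim : ∀ t, Tendsto (fun i => ψ i t) l (𝓝 (σ t)))
    (hp : ∀ i, ∃ a : ℕ → ℝ, ∀ t, ψ i t = ∑ j ∈ Finset.range k, a j * t ^ j) :
    ∃ p : Polynomial ℝ, ∀ t, σ t = p.eval t := by
  let v : ℕ → ℝ := fun i => i
  have hv : Set.InjOn v (Finset.range k) := fun a _ b _ h => by simpa [v] using h
  refine ⟨Lagrange.interpolate (Finset.range k) v (fun i => σ (v i)), fun t => ?_⟩
  have h1 : ∀ i, ψ i t = (Lagrange.interpolate (Finset.range k) v (fun j => ψ i (v j))).eval t := by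
    intro i
    obtain ⟨a, ha⟩ := hp i
    let p : Polynomial ℝ := ∑ j ∈ Finset.range k, Polynomial.C (a j) * Polynomial.X ^ j
    have hpe : ∀ t, p.eval t = ψ i t := by
      intro t; simp [p, Polynomial.eval_finsetSum, ha]
    have hdeg : p.degree < (Finset.range k).card := by
      rw [Finset.card_range]
      refine (Polynomial.degree_sum_le _ _).trans_lt ?_
      rw [Finset.sup_lt_iff (by exact WithBot.bot_lt_coe k)]
      intro j hj
      exact (Polynomial.degree_C_mul_X_pow_le _ _).trans_lt (by exact_mod_cast Finset.mem_range.1 hj)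
    rw [← hpe t, ← Lagrange.eq_interpolate_of_eval_eq _ hv hdeg (fun j _ => hpe (v j))]
  refine tendsto_nhds_unique (hlim t) ?_
  simp_rw [h1, Lagrange.interpolate_apply, Polynomial.eval_finsetSum, Polynomial.eval_mul,
    Polynomial.eval_C]
  exact tendsto_finsetSum _ fun j _ => (hlim (v j)).mul_const _

lemma integral_mem_closed {E : Type*} [NormedAddCommGroup E] [NormedSpace ℝ E] [CompleteSpace E]
    (V : Submodule ℝ E) (hV : IsClosed (V : Set E)) (g : ℝ → E) (hg : Integrable g)
    (h : ∀ s, g s ∈ V) : ∫ s, g s ∈ V := by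
  have : IsClosed (V : Set E) := hV
  rw [← Submodule.Quotient.mk_eq_zero]
  have := V.mkQL.integral_comp_comm hg
  change V.mkQL (∫ s, g s) = 0
  rw [← this]
  have h0 : ∀ s, V.mkQL (g s) = 0 := fun s => (Submodule.Quotient.mk_eq_zero V).2 (h s)
  simp [h0]

open ContinuousLinearMap in
open scoped Convolution in
lemma uat_pow {X : Type*} [TopologicalSpace X] [CompactSpace X]
    (V : Submodule ℝ C(X, ℝ)) (hV : IsClosed (V : Set C(X, ℝ))) (L : C(X, ℝ))
    (σ : C(ℝ, ℝ)) (hσ : ¬ ∃ p : Polynomial ℝ, ∀ t : ℝ, σ t = p.eval t)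
    (h : ∀ c b : ℝ, σ.comp (c • L + ContinuousMap.const X b) ∈ V) (k : ℕ) : L ^ k ∈ V := by
  by_contra hk
  apply hσ
  let φ : ℕ → ContDiffBump (0 : ℝ) := fun n =>
    ⟨1 / (n + 1) / 2, 1 / (n + 1), by positivity, half_lt_self (by positivity)⟩
  have hφ : Tendsto (fun n => (φ n).rOut) atTop (𝓝 0) := tendsto_one_div_add_atTop_nhds_zero_nat
  refine poly_limit k σ (fun n => (φ n).normed volume ⋆[lsmul ℝ ℝ, volume] σ)
    (fun t => ContDiffBump.convolution_tendsto_right_of_continuous hφ σ.continuous t) (fun n => ?_)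
  set ψ := (φ n).normed volume ⋆[lsmul ℝ ℝ, volume] σ with hψdef
  have hcs : HasCompactSupport ((φ n).normed volume) := (φ n).hasCompactSupport_normed
  have hψ : ContDiff ℝ (⊤ : ℕ∞) ψ :=
    hcs.contDiff_convolution_left _ (φ n).contDiff_normed σ.continuous.locallyIntegrable
  refine poly_of_iteratedDeriv k ψ hψ fun b => ?_
  by_contra hb
  have hkc : Continuous (iteratedDeriv k ψ) :=
      hψ.continuous_iteratedDeriv k (by exact_mod_cast le_top)
  have := uat_iter V hV L ψ hψ ?_ k hkc 0 b
  · apply hk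
    have h2 := V.smul_mem (iteratedDeriv k ψ b)⁻¹ this
    convert h2 using 1
    ext x
    simp
    field_simp
  · intro c b
    set g : ℝ → C(X, ℝ) := fun s =>
      (φ n).normed volume s • σ.comp (c • L + ContinuousMap.const X (b - s)) with hgdef
    have hgc : Continuous g := by
      refine (φ n).continuous_normed.smul ((ContinuousMap.continuous_postcomp σ).comp ?_)
      refine continuous_const.add ?_
      exact (ContinuousMap.continuous_const').comp (by fun_prop)
    have hgi : Integrable g := hgc.integrable_of_hasCompactSupport hcs.smul_right
    have hm := integral_mem_closed V hV g hgi (fun s => V.smul_mem _ (h _ _))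
    convert hm using 1
    ext x
    rw [ContinuousMap.integral_apply hgi]
    simp [hψdef, convolution, hgdef, add_sub_assoc]

lemma uat_scalar {n : ℕ} (K : Set (Fin n → ℝ)) (hK : IsCompact K)
    (σ : C(ℝ, ℝ)) (hσ : ¬ ∃ p : Polynomial ℝ, ∀ t : ℝ, σ t = p.eval t)
    (g : C(K, ℝ)) (ε : ℝ) (hε : 0 < ε) :
    ∃ c : ((Fin n → ℝ) × ℝ) →₀ ℝ, ∀ x : K,
      |(c.sum fun p a => a * σ ((∑ j, p.1 j * x.1 j) + p.2)) - g x| < ε := by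
  have : CompactSpace K := isCompact_iff_compactSpace.1 hK
  let lin : (Fin n → ℝ) → C(K, ℝ) := fun w => ⟨fun x => ∑ j, w j * x.1 j,
    continuous_finsetSum _ fun j _ => continuous_const.mul
      ((continuous_apply j).comp continuous_subtype_val)⟩
  let u : ((Fin n → ℝ) × ℝ) → C(K, ℝ) := fun p => σ.comp (lin p.1 + ContinuousMap.const K p.2)
  let W := Submodule.span ℝ (Set.range u)
  let V := W.topologicalClosure
  have hV : IsClosed (V : Set C(K, ℝ)) := W.isClosed_topologicalClosure
  have hpow : ∀ w k, lin w ^ k ∈ V := by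
    intro w k
    refine uat_pow V hV (lin w) σ hσ (fun c b => ?_) k
    apply W.le_topologicalClosure
    apply Submodule.subset_span
    refine ⟨(c • w, b), ?_⟩
    simp only [u]
    congr 2
    ext x
    simp [lin, Finset.mul_sum, mul_assoc]
  have hexp : ∀ w, NormedSpace.exp (lin w) ∈ V := by
    intro w
    have hs := NormedSpace.exp_series_hasSum_exp' (𝕂 := ℝ) (lin w)
    exact hV.mem_of_tendsto hs (Eventually.of_forall fun s =>
      V.sum_mem fun k _ => V.smul_mem _ (hpow w k))
  let E : Set C(K, ℝ) := Set.range fun w => NormedSpace.exp (lin w)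
  let A := Algebra.adjoin ℝ E
  have hcl : (Submonoid.closure E : Set C(K, ℝ)) ⊆ E := by
    intro f hf
    induction hf using Submonoid.closure_induction with
    | mem x hx => exact hx
    | one =>
      refine ⟨0, ?_⟩
      have : lin 0 = 0 := by ext x; simp [lin]
      simp [this]
    | mul x y _ _ hx hy =>
      obtain ⟨w, rfl⟩ := hx
      obtain ⟨w', rfl⟩ := hy
      refine ⟨w + w', ?_⟩
      have : lin (w + w') = lin w + lin w' := by
        ext x; simp [lin, add_mul, Finset.sum_add_distrib]
      simp only [this]
      exact NormedSpace.exp_add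
  have hAV : ∀ f ∈ A, f ∈ V := by
    intro f hf
    have : f ∈ Subalgebra.toSubmodule A := hf
    rw [Algebra.adjoin_eq_span] at this
    refine Submodule.span_le.2 ?_ this
    intro f hf
    obtain ⟨w, rfl⟩ := hcl hf
    exact hexp w
  have hsep : A.SeparatesPoints := by
    intro x y hxy
    have : ∃ i, x.1 i ≠ y.1 i := by
      by_contra hh; push Not at hh; exact hxy (Subtype.ext (funext hh))
    obtain ⟨i, hi⟩ := this
    refine ⟨_, ⟨NormedSpace.exp (lin (Pi.single i 1)), Algebra.subset_adjoin ⟨_, rfl⟩, rfl⟩, ?_⟩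
    have hev : ∀ x : K, (NormedSpace.exp (lin (Pi.single i 1))) x = Real.exp (x.1 i) := by
      intro x
      have := NormedSpace.map_exp (ContinuousMap.evalAlgHom ℝ ℝ x) (continuous_eval_const x) (lin (Pi.single i 1))
      have h2 : (ContinuousMap.evalAlgHom ℝ ℝ x) (lin (Pi.single i 1)) = x.1 i := by
        change ∑ j, (Pi.single i 1 : Fin n → ℝ) j * x.1 j = x.1 i
        simp [Pi.single_apply]
      rw [h2] at this
      rw [Real.exp_eq_exp_ℝ]
      exact this
    change (NormedSpace.exp (lin (Pi.single i 1))) x ≠ (NormedSpace.exp (lin (Pi.single i 1))) y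
    rw [hev, hev]
    simpa using hi
  have htop := ContinuousMap.subalgebra_topologicalClosure_eq_top_of_separatesPoints A hsep
  have hg : g ∈ V := by
    have : g ∈ A.topologicalClosure := by rw [htop]; trivial
    exact closure_minimal (fun f hf => hAV f hf) hV this
  obtain ⟨f, hf, hfg⟩ := Metric.mem_closure_iff.1 (show g ∈ closure (W : Set C(K, ℝ)) from hg) ε hε
  obtain ⟨c, hc⟩ := Finsupp.mem_span_range_iff_exists_finsupp.1 hf
  refine ⟨c, fun x => ?_⟩
  have h1 := (ContinuousMap.dist_lt_iff hε).1 hfg x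
  rw [dist_comm, Real.dist_eq] at h1
  convert h1 using 3
  rw [← hc, Finsupp.sum, Finsupp.sum, ContinuousMap.sum_apply]
  simp [u, lin]

lemma uat_vec {n m : ℕ} (K : Set (Fin n → ℝ)) (hK : IsCompact K)
    (σ : C(ℝ, ℝ)) (hσ : ¬ ∃ p : Polynomial ℝ, ∀ t : ℝ, σ t = p.eval t)
    (g : Fin m → C(K, ℝ)) (ε : ℝ) (hε : 0 < ε) :
    ∃ F, IsNN σ n m F ∧ ∀ x : K, ∀ i, |F x i - g i x| < ε := by
  classical
  choose c hc using fun i => uat_scalar K hK σ hσ (g i) ε hε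
  let P : Finset ((Fin n → ℝ) × ℝ) := Finset.univ.biUnion fun i => (c i).support
  let e := P.equivFin
  refine ⟨_, IsNN.comp (fun i j => c i (e.symm j).1) (fun _ => 0)
    (IsNN.affine (fun j l => (e.symm j).1.1 l) (fun j => (e.symm j).1.2)), fun x i => ?_⟩
  convert hc i x using 3
  rw [Finsupp.sum_of_support_subset (s := P) _
    (Finset.subset_biUnion_of_mem (fun i => (c i).support) (Finset.mem_univ i)) _ (by simp)]
  rw [add_zero, ← Finset.sum_coe_sort P]
  exact Equiv.sum_comp e.symm
    (fun p : P => c i p.1 * σ ((∑ j, p.1.1 j * x.1 j) + p.1.2))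

end

/-- Theorem 3.5: in the full CSIP setting, for every `ε > 0` there is a single
neural network `NN = (NN_a, NN_y)` that for all `x ∈ Kx` outputs a feasible point of `Γ(x)`
that is `ε`-optimal: `f(x, NN_a(x), NN_y(x)) − V(x) ≤ ε`. -/
theorem stmt12 {nx ny : ℕ} {S : Type*}
    (σ : ℝ → ℝ) (hσcont : Continuous σ)
    (hσnonpoly : ¬ ∃ p : Polynomial ℝ, ∀ t : ℝ, σ t = p.eval t)
    (Kx : Set (Fin nx → ℝ)) (hKx : IsCompact Kx)
    (Ky : Set (Fin ny → ℝ)) (hKycomp : IsCompact Ky) (hKyconv : Convex ℝ Ky)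
    (hKyne : Ky.Nonempty)
    (hbox : ∃ r : ℝ, 0 < r ∧ r < 1 ∧ ∃ Lr : ℝ, 1 ≤ Lr ∧
      ∀ δ : ℝ, 0 < δ → δ < r → ∃ C : Set (Fin ny → ℝ),
        IsClosed C ∧ Convex ℝ C ∧ C ⊆ Ky ∧
        (∀ y' ∈ C, ∀ y : Fin ny → ℝ, ‖y' - y‖ ≤ δ → y ∈ Ky) ∧
        (∀ y ∈ Ky, ∃ y' ∈ C, ‖y - y'‖ ≤ Lr * δ))
    (aLow : ℝ) (f : (Fin nx → ℝ) → ℝ → (Fin ny → ℝ) → ℝ)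
    (I : S → (Fin nx → ℝ) → ℝ → (Fin ny → ℝ) → ℝ)
    (Lf : NNReal)
    (hfLip : ∀ x ∈ Kx, LipschitzOnWith Lf
      (fun p : ℝ × (Fin ny → ℝ) => f x p.1 p.2) (Set.Ici aLow ×ˢ Ky))
    (hfcont : ContinuousOn
      (fun q : (Fin nx → ℝ) × ℝ × (Fin ny → ℝ) => f q.1 q.2.1 q.2.2)
      (Kx ×ˢ Set.Ici aLow ×ˢ Ky))
    (hfconv : ∀ x ∈ Kx,
      ConvexOn ℝ (Set.Ici aLow ×ˢ Ky) (fun p : ℝ × (Fin ny → ℝ) => f x p.1 p.2))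
    (Laf : ℝ) (hLaf : 0 < Laf)
    (hfslope : ∀ x ∈ Kx, ∀ y ∈ Ky, ∀ a1 a2 : ℝ, aLow ≤ a2 → a2 ≤ a1 →
      Laf * (a1 - a2) ≤ f x a1 y - f x a2 y)
    (LI : NNReal)
    (hILip : ∀ s : S, LipschitzOnWith LI
      (fun q : (Fin nx → ℝ) × ℝ × (Fin ny → ℝ) => I s q.1 q.2.1 q.2.2)
      (Kx ×ˢ Set.Ici aLow ×ˢ Ky))
    (hIconc : ∀ s : S, ∀ x ∈ Kx,
      ConcaveOn ℝ (Set.Ici aLow ×ˢ Ky) (fun p : ℝ × (Fin ny → ℝ) => I s x p.1 p.2))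
    (LaI : ℝ) (hLaI : 0 < LaI)
    (hIslope : ∀ s : S, ∀ x ∈ Kx, ∀ y ∈ Ky, ∀ a1 a2 : ℝ, aLow ≤ a2 → a2 ≤ a1 →
      LaI * (a1 - a2) ≤ I s x a1 y - I s x a2 y)
    (M : ℝ)
    (hM : IsGLB {z : ℝ | ∃ s : S, ∃ x ∈ Kx, ∃ y ∈ Ky, z = I s x aLow y} M) :
    ∀ ε : ℝ, 0 < ε →
      ∃ F : (Fin nx → ℝ) → (Fin (ny + 1) → ℝ), IsNN σ nx (ny + 1) F ∧
        ∀ x ∈ Kx,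
          (F x 0, fun i : Fin ny => F x i.succ) ∈ GammaFull Ky aLow I x ∧
          f x (F x 0) (fun i : Fin ny => F x i.succ) - VFull Ky aLow f I x ≤ ε := by
  intro ε hε
  obtain ⟨r, hr0, hr1, Lr, hLr, hC⟩ := hbox
  have hMl : ∀ s, ∀ x ∈ Kx, ∀ y ∈ Ky, M ≤ I s x aLow y :=
    fun s x hx y hy => hM.1 ⟨s, x, hx, y, hy, rfl⟩
  obtain ⟨B, hB0, hB⟩ : ∃ B : ℝ, 0 ≤ B ∧ -M ≤ LaI * B := by
    refine ⟨max 0 (-M) / LaI, by positivity, ?_⟩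
    rw [mul_div_cancel₀ _ hLaI.ne']
    exact le_max_right _ _
  have hfeas : ∀ x ∈ Kx, ∀ y ∈ Ky, ∀ s, 0 ≤ I s x (aLow + B) y := by
    intro x hx y hy s
    have h1 := hIslope s x hx y hy (aLow + B) aLow le_rfl (by linarith)
    have h2 := hMl s x hx y hy
    rw [add_sub_cancel_left] at h1
    linarith
  have hf' : ∀ x ∈ Kx, ∀ a a' : ℝ, aLow ≤ a → aLow ≤ a' → ∀ y ∈ Ky, ∀ y' ∈ Ky, ∀ D : ℝ,
      |a - a'| ≤ D → dist y y' ≤ D → f x a y ≤ f x a' y' + Lf * D := by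
    intro x hx a a' ha ha' y hy y' hy' D h1 h2
    have h := (hfLip x hx).dist_le_mul (a, y) ⟨ha, hy⟩ (a', y') ⟨ha', hy'⟩
    rw [Real.dist_eq, Prod.dist_eq] at h
    have h3 : max (dist a a') (dist y y') ≤ D := max_le h1 h2
    have h4 := mul_le_mul_of_nonneg_left h3 Lf.2
    have h5 := le_abs_self (f x a y - f x a' y')
    simp only at h
    change (Lf : ℝ) * _ ≤ (Lf : ℝ) * _ at h4
    linarith
  have hI' : ∀ s, ∀ x ∈ Kx, ∀ x' ∈ Kx, ∀ a a' : ℝ, aLow ≤ a → aLow ≤ a' → ∀ y ∈ Ky, ∀ y' ∈ Ky,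
      ∀ D : ℝ, dist x x' ≤ D → |a - a'| ≤ D → dist y y' ≤ D →
      I s x a y ≤ I s x' a' y' + LI * D := by
    intro s x hx x' hx' a a' ha ha' y hy y' hy' D h0 h1 h2
    have h := (hILip s).dist_le_mul (x, a, y) ⟨hx, ha, hy⟩ (x', a', y') ⟨hx', ha', hy'⟩
    rw [Real.dist_eq, Prod.dist_eq, Prod.dist_eq] at h
    have h3 : max (dist x x') (max (dist a a') (dist y y')) ≤ D := max_le h0 (max_le h1 h2)
    have h4 := mul_le_mul_of_nonneg_left h3 LI.2
    have h5 := le_abs_self (I s x a y - I s x' a' y')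
    simp only at h
    change (LI : ℝ) * _ ≤ (LI : ℝ) * _ at h4
    linarith
  set V := VFull Ky aLow f I with hVdef
  have hVle : ∀ x ∈ Kx, ∀ a y, (a, y) ∈ GammaFull Ky aLow I x → V x ≤ f x a y := by
    intro x hx a y hay
    refine csInf_le ?_ ⟨(a, y), hay, rfl⟩
    obtain ⟨y0, hy0⟩ := hKyne
    refine ⟨f x aLow y0 - Lf * Metric.diam Ky, ?_⟩
    rintro _ ⟨⟨a, y⟩, ⟨ha, hy, -⟩, rfl⟩
    simp only at ha hy ⊢
    have h1 := hfslope x hx y hy a aLow le_rfl ha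
    have h2 := hf' x hx aLow aLow le_rfl le_rfl y0 hy0 y hy (Metric.diam Ky)
      (by simpa using Metric.diam_nonneg) (Metric.dist_le_diam_of_mem hKycomp.isBounded hy0 hy)
    have h3 : 0 ≤ Laf * (a - aLow) := mul_nonneg hLaf.le (by linarith)
    linarith
  have hVex : ∀ x ∈ Kx, ∀ η : ℝ, 0 < η → ∃ a y, aLow ≤ a ∧ a ≤ aLow + B ∧ y ∈ Ky ∧
      (∀ s, 0 ≤ I s x a y) ∧ f x a y < V x + η := by
    intro x hx η hη
    obtain ⟨y0, hy0⟩ := hKyne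
    have hne : ((fun p : ℝ × (Fin ny → ℝ) => f x p.1 p.2) '' GammaFull Ky aLow I x).Nonempty :=
      ⟨_, (aLow + B, y0), ⟨by simpa using hB0, hy0, hfeas x hx y0 hy0⟩, rfl⟩
    obtain ⟨_, ⟨⟨a, y⟩, ⟨ha, hy, hs⟩, rfl⟩, hlt⟩ :=
      exists_lt_of_csInf_lt hne (lt_add_of_pos_right (V x) hη)
    simp only at ha hy hs hlt
    rcases le_total a (aLow + B) with h | h
    · exact ⟨a, y, ha, h, hy, hs, hlt⟩
    · refine ⟨aLow + B, y, by linarith, le_rfl, hy, hfeas x hx y hy, ?_⟩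
      have h1 := hfslope x hx y hy a (aLow + B) (by linarith) h
      have h3 : 0 ≤ Laf * (a - (aLow + B)) := mul_nonneg hLaf.le (by linarith)
      linarith
  -- uniform continuity
  have huc : ∀ η : ℝ, 0 < η → ∃ ρ : ℝ, 0 < ρ ∧ ∀ x ∈ Kx, ∀ x' ∈ Kx, dist x x' < ρ →
      ∀ a ∈ Set.Icc aLow (aLow + B + 1), ∀ a' ∈ Set.Icc aLow (aLow + B + 1), |a - a'| < ρ →
      ∀ y ∈ Ky, f x a y < f x' a' y + η := by
    intro η hη
    have hQ : IsCompact (Kx ×ˢ Set.Icc aLow (aLow + B + 1) ×ˢ Ky) :=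
      hKx.prod (isCompact_Icc.prod hKycomp)
    have hu := hQ.uniformContinuousOn_of_continuous (hfcont.mono
      (Set.prod_mono le_rfl (Set.prod_mono Set.Icc_subset_Ici_self le_rfl)))
    obtain ⟨ρ, hρ, h⟩ := Metric.uniformContinuousOn_iff.1 hu η hη
    refine ⟨ρ, hρ, fun x hx x' hx' hd a ha a' ha' hda y hy => ?_⟩
    have h1 := h (x, a, y) ⟨hx, ha, hy⟩ (x', a', y) ⟨hx', ha', hy⟩ (by
      rw [Prod.dist_eq, Prod.dist_eq]
      exact max_lt hd (max_lt hda (by simpa using hρ)))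
    rw [Real.dist_eq] at h1
    have := (abs_lt.1 h1).2
    simp only at this
    linarith
  -- lower semicontinuity of V
  have hlsc : ∀ η : ℝ, 0 < η → ∃ ρ : ℝ, 0 < ρ ∧ ∀ x ∈ Kx, ∀ x' ∈ Kx, dist x x' < ρ →
      V x' ≤ V x + η := by
    intro η hη
    obtain ⟨ρ, hρ, h⟩ := huc (η / 2) (by positivity)
    set κ : ℝ := LI / LaI with hκ
    have hκ0 : 0 ≤ κ := by positivity
    have hκL : LaI * κ = LI := by rw [hκ]; field_simp
    refine ⟨min ρ (min ρ 1 / (2 * (κ + 1))), by positivity, fun x hx x' hx' hd => ?_⟩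
    obtain ⟨a, y, ha, haB, hy, hs, hlt⟩ := hVex x hx (η / 2) (by positivity)
    have hd1 : dist x x' < ρ := hd.trans_le (min_le_left _ _)
    have hd2 : dist x x' * (2 * (κ + 1)) < min ρ 1 := by
      have := hd.trans_le (min_le_right _ _)
      rwa [lt_div_iff₀ (by positivity)] at this
    have hdn : 0 ≤ dist x x' := dist_nonneg
    have ht0 : 0 ≤ κ * dist x x' := by positivity
    have ht : κ * dist x x' < min ρ 1 := by nlinarith
    have ht1 := ht.trans_le (min_le_left _ _)
    have ht2 := ht.trans_le (min_le_right _ _)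
    have hfe : (a + κ * dist x x', y) ∈ GammaFull Ky aLow I x' := by
      refine ⟨by simp only; linarith, hy, fun s => ?_⟩
      simp only
      have h1 := hIslope s x' hx' y hy (a + κ * dist x x') a ha (by linarith)
      have h2 := hI' s x hx x' hx' a a ha ha y hy y hy (dist x x') le_rfl (by simp) (by simp)
      have h3 := hs s
      rw [add_sub_cancel_left, ← mul_assoc, hκL] at h1
      linarith
    have h1 := hVle x' hx' _ _ hfe
    have h2 := h x' hx' x hx (by rwa [dist_comm]) (a + κ * dist x x') ⟨by linarith, by linarith⟩
      a ⟨ha, by linarith⟩ (by rw [add_sub_cancel_left, abs_of_nonneg ht0]; exact ht1) y hy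
    linarith
  have hLI0 : (0:ℝ) ≤ LI := LI.2
  have hLf0 : (0:ℝ) ≤ Lf := Lf.2
  -- constants
  obtain ⟨H, hH1, hHI⟩ : ∃ H : ℝ, 1 ≤ H ∧ LaI * H ≥ LI * Lr + 2 * (LI + 1) := by
    refine ⟨(LI * Lr + 2 * (LI + 1)) / LaI + 1, ?_, ?_⟩
    · have : 0 ≤ (LI * Lr + 2 * (LI + 1)) / LaI := by positivity
      linarith
    · rw [mul_add, mul_div_cancel₀ _ hLaI.ne']
      linarith
  obtain ⟨δ, hδ0, hδr, hδ1, hδε⟩ : ∃ δ : ℝ, 0 < δ ∧ δ < r ∧ (H + Lr) * δ ≤ 1 ∧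
      Lf * ((H + Lr) * δ) ≤ ε / 8 := by
    refine ⟨min (r / 2) (min 1 (ε / 8) / ((Lf + 1) * (H + Lr))), by positivity,
      (min_le_left _ _).trans_lt (by linarith), ?_⟩
    set δ := min (r / 2) (min 1 (ε / 8) / ((Lf + 1) * (H + Lr)))
    have h1 : δ * ((Lf + 1) * (H + Lr)) ≤ min 1 (ε / 8) :=
      (le_div_iff₀ (by positivity)).1 (min_le_right _ _)
    have h2 := h1.trans (min_le_left _ _)
    have h3 := h1.trans (min_le_right _ _)
    have hp : 0 ≤ (H + Lr) * δ := by positivity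
    have hp2 : 0 ≤ Lf * ((H + Lr) * δ) := by positivity
    constructor <;> linarith
  obtain ⟨C, hCcl, hCconv, hCK, hCint, hCapp⟩ := hC δ hδ0 hδr
  let T : Kx → Set (ℝ × (Fin ny → ℝ)) := fun x =>
    {p | aLow + δ ≤ p.1 ∧ p.2 ∈ C ∧ (∀ s, LI * δ ≤ I s x p.1 p.2) ∧ f x p.1 p.2 ≤ V x + ε / 2}
  have hTconv : ∀ x, Convex ℝ (T x) := by
    rintro ⟨x, hx⟩ p ⟨hp1, hp2, hp3, hp4⟩ q ⟨hq1, hq2, hq3, hq4⟩ u v hu hv huv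
    have hpm : p ∈ Set.Ici aLow ×ˢ Ky := ⟨by simp only [Set.mem_Ici]; linarith, hCK hp2⟩
    have hqm : q ∈ Set.Ici aLow ×ˢ Ky := ⟨by simp only [Set.mem_Ici]; linarith, hCK hq2⟩
    refine ⟨?_, hCconv hp2 hq2 hu hv huv, fun s => ?_, ?_⟩
    · exact convex_Ici (𝕜 := ℝ) (aLow + δ) hp1 hq1 hu hv huv
    · have h := (hIconc s x hx).2 hpm hqm hu hv huv
      refine le_trans ?_ h
      have h1 := mul_le_mul_of_nonneg_left (hp3 s) hu
      have h2 := mul_le_mul_of_nonneg_left (hq3 s) hv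
      simp only [smul_eq_mul]
      calc (LI:ℝ) * δ = u * (LI * δ) + v * (LI * δ) := by rw [← add_mul, huv, one_mul]
        _ ≤ _ := add_le_add h1 h2
    · have h := (hfconv x hx).2 hpm hqm hu hv huv
      refine le_trans h ?_
      have h1 := mul_le_mul_of_nonneg_left hp4 hu
      have h2 := mul_le_mul_of_nonneg_left hq4 hv
      simp only [smul_eq_mul]
      calc _ ≤ u * (V x + ε / 2) + v * (V x + ε / 2) := add_le_add h1 h2
        _ = _ := by rw [← add_mul, huv, one_mul]
  have hTloc : ∀ x : Kx, ∃ c, ∀ᶠ x' in nhds x, c ∈ T x' := by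
    rintro ⟨x0, hx0⟩
    obtain ⟨a0, y0, ha0, ha0B, hy0, hs0, hlt0⟩ := hVex x0 hx0 (ε / 8) (by positivity)
    obtain ⟨y1, hy1, hy01⟩ := hCapp y0 hy0
    obtain ⟨ρ1, hρ1, h1⟩ := hlsc (ε / 8) (by positivity)
    obtain ⟨ρ2, hρ2, h2⟩ := huc (ε / 8) (by positivity)
    refine ⟨(a0 + H * δ, y1), ?_⟩
    rw [Metric.eventually_nhds_iff]
    refine ⟨min δ (min ρ1 ρ2), by positivity, ?_⟩
    rintro ⟨x, hx⟩ hd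
    rw [Subtype.dist_eq] at hd
    simp only at hd
    have hd0 : dist x x0 < δ := hd.trans_le (min_le_left _ _)
    have hd1 : dist x x0 < ρ1 := hd.trans_le ((min_le_right _ _).trans (min_le_left _ _))
    have hd2 : dist x x0 < ρ2 := hd.trans_le ((min_le_right _ _).trans (min_le_right _ _))
    have hLd : 0 ≤ Lr * δ := by positivity
    have hHd : δ ≤ H * δ := by nlinarith
    have hy01' : dist y0 y1 ≤ Lr * δ := by rw [dist_eq_norm]; exact hy01
    have hy1K := hCK hy1
    refine ⟨by simp only; linarith, hy1, fun s => ?_, ?_⟩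
    · simp only
      have e1 := hIslope s x0 hx0 y0 hy0 (a0 + H * δ) a0 ha0 (by linarith)
      have e2 := hs0 s
      have e3 := hI' s x0 hx0 x0 hx0 (a0 + H * δ) (a0 + H * δ) (by linarith) (by linarith)
        y0 hy0 y1 hy1K (Lr * δ) (by simpa using hLd) (by simpa using hLd) hy01'
      have e4 := hI' s x0 hx0 x hx (a0 + H * δ) (a0 + H * δ) (by linarith) (by linarith)
        y1 hy1K y1 hy1K δ (by rw [dist_comm]; exact hd0.le) (by simpa using hδ0.le)
        (by simpa using hδ0.le)
      rw [add_sub_cancel_left] at e1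
      have e5 := mul_le_mul_of_nonneg_right hHI hδ0.le
      nlinarith
    · simp only
      have e1 := h1 x hx x0 hx0 hd1
      have hm : a0 + H * δ ∈ Set.Icc aLow (aLow + B + 1) := ⟨by linarith, by linarith⟩
      have e2 := h2 x hx x0 hx0 hd2 _ hm _ hm (by simpa using hρ2) y1 hy1K
      have e3 := hf' x0 hx0 (a0 + H * δ) a0 (by linarith) ha0 y1 hy1K y0 hy0 ((H + Lr) * δ)
        (by rw [add_sub_cancel_left, abs_of_nonneg (by linarith)]; linarith)
        (by rw [dist_comm]; linarith)
      linarith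
  obtain ⟨g, hg⟩ := exists_continuous_forall_mem_convex_of_local_const hTconv hTloc
  let g' : Fin (ny + 1) → C(Kx, ℝ) := Fin.cons
    (⟨fun x => (g x).1, continuous_fst.comp g.continuous⟩ : C(Kx, ℝ))
    (fun i => (⟨fun x => (g x).2 i,
      (continuous_apply i).comp (continuous_snd.comp g.continuous)⟩ : C(Kx, ℝ)))
  obtain ⟨F, hF, hFg⟩ := uat_vec Kx hKx ⟨σ, hσcont⟩ hσnonpoly g' δ hδ0
  refine ⟨F, hF, fun x hx => ?_⟩
  obtain ⟨hg1, hg2, hg3, hg4⟩ := hg ⟨x, hx⟩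
  have ha : |F x 0 - (g ⟨x, hx⟩).1| < δ := hFg ⟨x, hx⟩ 0
  have hy : dist (fun i : Fin ny => F x i.succ) (g ⟨x, hx⟩).2 ≤ δ := by
    rw [dist_pi_le_iff hδ0.le]
    intro i
    rw [Real.dist_eq]
    exact (hFg ⟨x, hx⟩ i.succ).le
  simp only at hg3 hg4
  set a := (g ⟨x, hx⟩).1
  set y := (g ⟨x, hx⟩).2
  have haN : aLow ≤ F x 0 := by have := (abs_lt.1 ha).1; linarith
  have hyN : (fun i : Fin ny => F x i.succ) ∈ Ky :=
    hCint y hg2 _ (by rw [← dist_eq_norm, dist_comm]; exact hy)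
  refine ⟨⟨haN, hyN, fun s => ?_⟩, ?_⟩
  · simp only
    have e := hI' s x hx x hx a (F x 0) (by linarith) haN y (hCK hg2) _ hyN δ (by simpa using hδ0.le)
      (by rw [abs_sub_comm]; exact ha.le) (by rw [dist_comm]; exact hy)
    have := hg3 s
    linarith
  · have e := hf' x hx (F x 0) a haN (by linarith) _ hyN y (hCK hg2) δ ha.le hy
    have hd : δ ≤ (H + Lr) * δ := by nlinarith
    have := mul_le_mul_of_nonneg_left hd hLf0
    linarith
end

section
/- For every ε > 0 and every 0 < δ < ε, there exists a single neural network NN : ℝ^{3N} → ℝ^{1+2N} such that for all market parameters (K, π) ∈ [0, K̄]^N × [0, π̄]^{2N}: (i) if the market admits model-free static arbitrage of magnitude ε (i.e. some (a,h) ∈ Γ(K) with f(π,a,h) ≤ −ε), then NN(K,π) ∈ Γ(K) and f(π, NN(K,π)) ≤ −δ; (ii) if the market admits no model-free static arbitrage (V(K,π) = 0), then NN(K,π) ∈ Γ(K) and f(π, NN(K,π)) ≤ ε − δ. -/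
/-- Payoff at scenario `S` of the static strategy `q = (a, h⁺, h⁻)`. -/
noncomputable def payoffI {d N : ℕ} (Ψ : Fin N → (Fin d → ℝ) → ℝ → ℝ) (K : Fin N → ℝ)
    (S : Fin d → ℝ) (q : ℝ × (Fin N → ℝ) × (Fin N → ℝ)) : ℝ :=
  q.1 + ∑ i, (q.2.1 i - q.2.2 i) * Ψ i S (K i)

/-- Price of the static strategy `q = (a, h⁺, h⁻)` given bid/ask prices `πp`, `πm`. -/
noncomputable def priceF {N : ℕ} (πp πm : Fin N → ℝ) (q : ℝ × (Fin N → ℝ) × (Fin N → ℝ)) : ℝ :=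
  q.1 + ∑ i, (q.2.1 i * πp i - q.2.2 i * πm i)

/-- The set `Γ(K)` of static strategies superhedging the zero payoff on the prediction set. -/
def feasSet {d N : ℕ} (𝒮 : Set (Fin d → ℝ)) (Ψ : Fin N → (Fin d → ℝ) → ℝ → ℝ)
    (aLow Hbar : ℝ) (K : Fin N → ℝ) : Set (ℝ × (Fin N → ℝ) × (Fin N → ℝ)) :=
  {q | aLow ≤ q.1 ∧ (∀ i, q.2.1 i ∈ Set.Icc 0 Hbar) ∧ (∀ i, q.2.2 i ∈ Set.Icc 0 Hbar) ∧
       ∀ S ∈ 𝒮, 0 ≤ payoffI Ψ K S q}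

/-- Reading a strategy `(a, h⁺, h⁻)` off a network output vector in `ℝ^{1+2N}`. -/
def outStrat {N : ℕ} (O : Fin (1 + N + N) → ℝ) : ℝ × (Fin N → ℝ) × (Fin N → ℝ) :=
  (O ⟨0, by omega⟩,
   fun i => O ⟨1 + i.1, by have := i.isLt; omega⟩,
   fun i => O ⟨1 + N + i.1, by have := i.isLt; omega⟩)


section Helpers
open MeasureTheory Topology Filter

lemma poly_of_iter (k : ℕ) : ∀ f : ℝ → ℝ, ContDiff ℝ (⊤ : ℕ∞) f → (∀ x, iteratedDeriv k f x = 0) →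
    ∃ p : Polynomial ℝ, p.degree < k ∧ ∀ x, f x = p.eval x := by
  induction k with
  | zero =>
    intro f _ h
    exact ⟨0, by simp, fun x => by simpa using h x⟩
  | succ k ih =>
    intro f hf h
    have hd : ContDiff ℝ (⊤ : ℕ∞) (deriv f) := by
      have := (contDiff_infty_iff_deriv (f := f)).1 hf
      exact this.2
    obtain ⟨p, hp, hpf⟩ := ih (deriv f) hd (fun x => by
      have := h x; rwa [iteratedDeriv_succ'] at this)
    let q : Polynomial ℝ := ∑ i ∈ Finset.range k,
      Polynomial.monomial (i+1) (p.coeff i / (i+1))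
    have hq : q.derivative = p := by
      by_cases h0 : p = 0
      · simp [q, h0]
      simp only [q, Polynomial.derivative_sum, Polynomial.derivative_monomial]
      conv_rhs => rw [p.as_sum_range' k ((Polynomial.natDegree_lt_iff_degree_lt h0).2 hp)]
      refine Finset.sum_congr rfl fun i _ => ?_
      have : (i:ℝ) + 1 ≠ 0 := by positivity
      push_cast
      rw [div_mul_cancel₀ _ this]
    have hqd : q.degree < (k + 1 : ℕ) := by
      refine (Polynomial.degree_sum_le _ _).trans_lt ?_
      rw [Finset.sup_lt_iff (WithBot.bot_lt_coe _)]
      intro i hi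
      refine (Polynomial.degree_monomial_le _ _).trans_lt ?_
      have := Finset.mem_range.1 hi
      exact_mod_cast (by omega : i + 1 < k + 1)
    refine ⟨Polynomial.C (f 0 - q.eval 0) + q, ?_, ?_⟩
    · refine (Polynomial.degree_add_le _ _).trans_lt (max_lt ?_ hqd)
      exact (Polynomial.degree_C_le).trans_lt (by exact_mod_cast Nat.succ_pos k)
    · intro x
      have hc := is_const_of_deriv_eq_zero (f := fun x => f x - q.eval x)
        ((hf.differentiable (by simp)).sub q.differentiable) (fun y => by
          have h1 : HasDerivAt (fun x => f x - q.eval x) (deriv f y - q.derivative.eval y) y :=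
            ((hf.differentiable (by simp)) y).hasDerivAt.sub (q.hasDerivAt y)
          rw [h1.deriv, hq, hpf, sub_self]) x 0
      simp only [Polynomial.eval_add, Polynomial.eval_C]
      linarith

lemma fn_deriv {X : Type*} [TopologicalSpace X] [CompactSpace X] (M : Submodule ℝ C(X, ℝ))
    (hM : IsClosed (M : Set C(X, ℝ))) (g : ℝ → ℝ) (hg : ContDiff ℝ 1 g) (p u v : C(X, ℝ))
    (h : ∀ s : ℝ, p * (ContinuousMap.mk g hg.continuous).comp (u + s • v) ∈ M) :
    p * v * (ContinuousMap.mk (deriv g) (hg.continuous_deriv le_rfl)).comp u ∈ M := by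
  have hdc := hg.continuous_deriv le_rfl
  let c2 : C(ℝ, C(X, ℝ)) := ContinuousMap.curry
    ⟨fun z : ℝ × X => p z.2 * v z.2 * deriv g (u z.2 + z.1 * v z.2), by fun_prop⟩
  have hc : Continuous c2 := c2.continuous
  have hF : ∀ s : ℝ, (∫ r in (0:ℝ)..s, c2 r) =
      p * (ContinuousMap.mk g hg.continuous).comp (u + s • v)
       - p * (ContinuousMap.mk g hg.continuous).comp (u + (0:ℝ) • v) := by
    intro s
    ext x
    have e1 : (∫ r in (0:ℝ)..s, c2 r) x = ∫ r in (0:ℝ)..s, c2 r x := by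
      have := ContinuousLinearMap.intervalIntegral_comp_comm (a := 0) (b := s) (μ := volume)
        (ContinuousMap.evalCLM ℝ x : C(X,ℝ) →L[ℝ] ℝ) (hc.intervalIntegrable 0 s)
      simpa using this.symm
    rw [e1]
    have e2 : ∀ r ∈ Set.uIcc 0 s, HasDerivAt (fun r => p x * g (u x + r * v x)) (c2 r x) r := by
      intro r _
      have h1 : HasDerivAt (fun r => u x + r * v x) (v x) r := by
        simpa using ((hasDerivAt_id r).mul_const (v x)).const_add (u x)
      have h2 := ((hg.differentiable one_ne_zero) (u x + r * v x)).hasDerivAt.comp r h1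
      have h3 := h2.const_mul (p x)
      refine h3.congr_deriv ?_
      symm
      change p x * v x * deriv g (u x + r * v x) = _
      ring
    rw [intervalIntegral.integral_eq_sub_of_hasDerivAt e2]
    · simp
    · apply Continuous.intervalIntegrable
      exact (ContinuousMap.evalCLM ℝ x : C(X,ℝ) →L[ℝ] ℝ).continuous.comp hc
  have hD : HasDerivAt (fun s => ∫ r in (0:ℝ)..s, c2 r) (c2 0) 0 :=
    intervalIntegral.integral_hasDerivAt_right (hc.intervalIntegrable 0 0)
      (hc.stronglyMeasurableAtFilter _ _) hc.continuousAt
  have hmem : c2 0 ∈ M := by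
    have ht := hD.tendsto_slope
    refine hM.mem_of_tendsto ht (Eventually.of_forall fun s => ?_)
    rw [slope_def_module]
    refine M.smul_mem _ (M.sub_mem ?_ ?_)
    all_goals
      rw [SetLike.mem_coe.symm, hF]
      exact M.sub_mem (h _) (h _)
  convert hmem using 1
  ext x
  simp [c2, ContinuousMap.curry]

lemma integral_mem_sub {E : Type*} [NormedAddCommGroup E] [NormedSpace ℝ E] [CompleteSpace E]
    (M : Submodule ℝ E) (hM : IsClosed (M : Set E)) (f : ℝ → E) (hf : Integrable f)
    (h : ∀ s, f s ∈ M) : ∫ s, f s ∈ M := by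
  by_contra hn
  obtain ⟨l, hl, hl2⟩ : ∃ l : E →L[ℝ] ℝ, (∀ m ∈ M, l m = 0) ∧ l (∫ s, f s) ≠ 0 := by
    obtain ⟨l, u, h1, h2⟩ := geometric_hahn_banach_closed_point M.convex hM hn
    have h3 : ∀ m ∈ M, l m = 0 := by
      intro m hm
      by_contra hne
      have := h1 (((u+1) / l m) • m) (M.smul_mem _ hm)
      rw [map_smul, smul_eq_mul, div_mul_cancel₀ _ hne] at this
      linarith
    refine ⟨l, h3, ?_⟩
    have := h1 0 M.zero_mem
    rw [map_zero] at this
    linarith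
  apply hl2
  rw [← l.integral_comp_comm hf]
  simp [hl _ (h _)]

lemma conv_mem {X : Type*} [TopologicalSpace X] [CompactSpace X] (M : Submodule ℝ C(X, ℝ))
    (hM : IsClosed (M : Set C(X, ℝ))) (σ : ℝ → ℝ) (hσ : Continuous σ) (φ : ℝ → ℝ)
    (hφ : Continuous φ) (hφs : HasCompactSupport φ) (u : C(X, ℝ)) 
    (h : ∀ s : ℝ, (ContinuousMap.mk σ hσ).comp (u + ContinuousMap.const X s) ∈ M)
    (g : ℝ → ℝ) (hg : Continuous g) (hgd : ∀ t, g t = ∫ s, φ s * σ (t - s)) :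
    (ContinuousMap.mk g hg).comp u ∈ M := by
  let c2 : C(ℝ, C(X, ℝ)) := ContinuousMap.curry
    ⟨fun z : ℝ × X => φ z.1 * σ (u z.2 - z.1), by fun_prop⟩
  have hi : Integrable c2 := by
    apply c2.continuous.integrable_of_hasCompactSupport
    refine hφs.mono ?_
    intro s hs hs2
    apply hs
    ext x
    simp [c2, ContinuousMap.curry, hs2]
  have hmem : ∫ s, c2 s ∈ M := by
    refine integral_mem_sub M hM _ hi fun s => ?_
    convert M.smul_mem (φ s) (h (-s)) using 1
    ext x
    simp only [ContinuousMap.coe_smul, Pi.smul_apply, ContinuousMap.comp_apply,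
      ContinuousMap.add_apply, ContinuousMap.const_apply, smul_eq_mul, ContinuousMap.coe_mk,
      ← sub_eq_add_neg]
    rfl
  convert hmem using 1
  ext x
  rw [ContinuousMap.integral_apply hi]
  simp [hgd]
  rfl

lemma deriv_prod_mem {X : Type*} [TopologicalSpace X] [CompactSpace X] (M W : Submodule ℝ C(X, ℝ))
    (hM : IsClosed (M : Set C(X, ℝ))) (f : ℝ → ℝ) (hf : ContDiff ℝ (⊤ : ℕ∞) f)
    (h : ∀ u ∈ W, ∀ b : ℝ, (ContinuousMap.mk f hf.continuous).comp (u + ContinuousMap.const X b) ∈ M)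
    (l : List C(X, ℝ)) (hl : ∀ v ∈ l, v ∈ W) :
    ∀ u ∈ W, ∀ b : ℝ, l.prod * (ContinuousMap.mk (iteratedDeriv l.length f)
      (hf.continuous_iteratedDeriv l.length (by exact_mod_cast le_top))).comp
        (u + ContinuousMap.const X b) ∈ M := by
  induction l with
  | nil =>
    intro u hu b
    convert h u hu b using 1
    ext x
    simp
  | cons v l ih =>
    intro u hu b
    have hl' := ih (fun w hw => hl w (List.mem_cons_of_mem _ hw))
    have hv := hl v List.mem_cons_self
    have h1 : ContDiff ℝ 1 (iteratedDeriv l.length f) :=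
      (contDiff_nat_succ_iff_contDiff_one_iteratedDeriv.1
        (hf.of_le (by exact_mod_cast le_top) : ContDiff ℝ (l.length + 1 : ℕ) f)).2
    have := fn_deriv M hM _ h1 l.prod (u + ContinuousMap.const X b) v (fun s => by
      have := hl' (u + s • v) (W.add_mem hu (W.smul_mem _ hv)) b
      rwa [add_right_comm] at this)
    convert this using 1
    ext x
    simp [iteratedDeriv_succ, mul_comm]

lemma uat_core {X : Type*} [TopologicalSpace X] [CompactSpace X] (M W : Submodule ℝ C(X, ℝ))
    (hM : IsClosed (M : Set C(X, ℝ))) (σ : ℝ → ℝ) (hσ : Continuous σ)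
    (hσp : ¬ ∃ p : Polynomial ℝ, ∀ t : ℝ, σ t = p.eval t)
    (h : ∀ u ∈ W, ∀ b : ℝ, (ContinuousMap.mk σ hσ).comp (u + ContinuousMap.const X b) ∈ M)
    (hsep : (Algebra.adjoin ℝ (W : Set C(X, ℝ))).SeparatesPoints) : M = ⊤ := by
  have key : ∀ l : List C(X, ℝ), (∀ v ∈ l, v ∈ W) → l.prod ∈ M := by
    intro l hl
    by_contra hn
    apply hσp
    let φ : ℕ → ContDiffBump (0 : ℝ) := fun n =>
      ⟨1 / (n + 1) / 2, 1 / (n + 1), by positivity, by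
        have : (0:ℝ) < 1 / (n + 1) := by positivity
        linarith⟩
    let f : ℕ → ℝ → ℝ := fun n =>
      MeasureTheory.convolution ((φ n).normed volume) σ (ContinuousLinearMap.lsmul ℝ ℝ) volume
    have hfs : ∀ n, ContDiff ℝ (⊤ : ℕ∞) (f n) := fun n =>
      HasCompactSupport.contDiff_convolution_left _ (φ n).hasCompactSupport_normed
        (φ n).contDiff_normed hσ.locallyIntegrable
    have hlim : ∀ t, Tendsto (fun n => f n t) atTop (𝓝 (σ t)) := fun t =>
      ContDiffBump.convolution_tendsto_right_of_continuous
        (by exact tendsto_one_div_add_atTop_nhds_zero_nat) hσ t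
    have hfm : ∀ n, ∀ u ∈ W, ∀ b : ℝ, (ContinuousMap.mk (f n) (hfs n).continuous).comp
        (u + ContinuousMap.const X b) ∈ M := by
      intro n u hu b
      refine conv_mem M hM σ hσ ((φ n).normed volume) (φ n).continuous_normed
        (φ n).hasCompactSupport_normed _ (fun s => ?_) _ _ (fun t => ?_)
      · have := h u hu (b + s)
        convert this using 2
        rw [add_assoc]
        congr 1
      · simp [f, convolution]
    have hz : ∀ n b, iteratedDeriv l.length (f n) b = 0 := by
      intro n b
      by_contra hne
      apply hn
      have := M.smul_mem (iteratedDeriv l.length (f n) b)⁻¹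
        (deriv_prod_mem M W hM (f n) (hfs n) (hfm n) l hl 0 W.zero_mem b)
      convert this using 1
      ext x
      simp
      field_simp
    have hp := fun n => poly_of_iter l.length (f n) (hfs n) (hz n)
    choose p hpd hpe using hp
    refine ⟨Lagrange.interpolate (Finset.range l.length) (fun i : ℕ => (i:ℝ)) (fun i => σ i), ?_⟩
    intro t
    refine tendsto_nhds_unique (hlim t) ?_
    have : ∀ n, f n t = (Lagrange.interpolate (Finset.range l.length)
        (fun i : ℕ => (i:ℝ)) (fun i => f n i)).eval t := by
      intro n
      rw [hpe, Lagrange.eq_interpolate (f := p n) (s := Finset.range l.length)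
        (v := fun i : ℕ => (i:ℝ)) (fun a _ b _ hab => Nat.cast_injective hab)
        (by simpa using hpd n)]
      simp [hpe]
    simp_rw [this, Lagrange.interpolate_apply, Polynomial.eval_finsetSum, Polynomial.eval_mul,
      Polynomial.eval_C]
    exact tendsto_finsetSum _ fun i _ => (hlim i).mul_const _
  have hle : Subalgebra.toSubmodule (Algebra.adjoin ℝ (W : Set C(X, ℝ))) ≤ M := by
    rw [Algebra.adjoin_eq_span, Submodule.span_le]
    intro x hx
    obtain ⟨l, hl, rfl⟩ := Submonoid.exists_list_of_mem_closure hx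
    exact key l hl
  have htop := ContinuousMap.subalgebra_topologicalClosure_eq_top_of_separatesPoints _ hsep
  rw [eq_top_iff]
  intro x _
  have hx : x ∈ (Algebra.adjoin ℝ (W : Set C(X, ℝ))).topologicalClosure := by
    rw [htop]; trivial
  have hx2 : x ∈ closure ((Algebra.adjoin ℝ (W : Set C(X, ℝ)) : Subalgebra ℝ C(X,ℝ)) : Set C(X, ℝ)) := hx
  exact closure_minimal (fun y hy => hle hy) hM hx2

lemma isNN_fintype {ι : Type*} [Fintype ι] (σ : ℝ → ℝ) {m n : ℕ} (w : ι → Fin m → ℝ) (b : ι → ℝ)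
    (A : Fin n → ι → ℝ) :
    IsNN σ m n (fun x i => ∑ k, A i k * σ ((∑ j, w k j * x j) + b k)) := by
  let e := Fintype.equivFin ι
  have := IsNN.comp (fun i k => A i (e.symm k)) (fun _ => 0)
    (IsNN.affine (σ := σ) (fun k => w (e.symm k)) (fun k => b (e.symm k)))
  convert this using 3 with x i
  rw [add_zero]
  exact (Equiv.sum_comp e.symm (fun k => A i k * σ ((∑ j, w k j * x j) + b k))).symm

lemma uat {m n : ℕ} (X : Set (Fin m → ℝ)) (hX : IsCompact X) (σ : ℝ → ℝ) (hσ : Continuous σ)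
    (hσp : ¬ ∃ p : Polynomial ℝ, ∀ t : ℝ, σ t = p.eval t) (g : C(X, Fin n → ℝ)) (η : ℝ)
    (hη : 0 < η) : ∃ F, IsNN σ m n F ∧ ∀ x : X, ∀ i, |F x i - g x i| ≤ η := by
  have : CompactSpace X := isCompact_iff_compactSpace.1 hX
  let lin : (Fin m → ℝ) →ₗ[ℝ] C(X, ℝ) :=
    { toFun := fun w => ⟨fun x => ∑ j, w j * x.1 j, continuous_finsetSum _ fun j _ =>
        continuous_const.mul ((continuous_apply j).comp continuous_subtype_val)⟩
      map_add' := by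
        intro a b; ext x; simp [add_mul, Finset.sum_add_distrib]
      map_smul' := by
        intro a b; ext x; simp [Finset.mul_sum, mul_assoc] }
  let G : (Fin m → ℝ) × ℝ → C(X, ℝ) := fun p =>
    (ContinuousMap.mk σ hσ).comp (lin p.1 + ContinuousMap.const X p.2)
  let S : Submodule ℝ C(X, ℝ) := Submodule.span ℝ (Set.range G)
  have htop : S.topologicalClosure = ⊤ := by
    refine uat_core S.topologicalClosure (LinearMap.range lin) S.isClosed_topologicalClosure
      σ hσ hσp ?_ ?_
    · rintro u ⟨w, rfl⟩ b
      exact S.le_topologicalClosure (Submodule.subset_span ⟨(w, b), rfl⟩)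
    · intro x y hxy
      have : ∃ j, x.1 j ≠ y.1 j := by
        by_contra hc
        push Not at hc
        exact hxy (Subtype.ext (funext hc))
      obtain ⟨j, hj⟩ := this
      refine ⟨lin (Pi.single j 1), ⟨lin (Pi.single j 1), Algebra.subset_adjoin ⟨_, rfl⟩, rfl⟩, ?_⟩
      simpa [lin, Pi.single_apply] using hj
  have happ : ∀ i : Fin n, ∃ c : ((Fin m → ℝ) × ℝ) →₀ ℝ, ∀ x : X,
      |(c.sum fun p a => a * σ ((∑ j, p.1 j * x.1 j) + p.2)) - g x i| ≤ η := by
    intro i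
    let gi : C(X, ℝ) := ⟨fun x => g x i, by fun_prop⟩
    have hgi : gi ∈ S.topologicalClosure := by rw [htop]; trivial
    have hgi2 : gi ∈ closure (S : Set C(X, ℝ)) := hgi
    obtain ⟨f, hf, hd⟩ := Metric.mem_closure_iff.1 hgi2 η hη
    obtain ⟨c, hc⟩ := (Finsupp.mem_span_range_iff_exists_finsupp).1 hf
    refine ⟨c, fun x => ?_⟩
    have h1 := (ContinuousMap.dist_apply_le_dist (f := gi) (g := f) x).trans hd.le
    rw [dist_comm, Real.dist_eq] at h1
    have h2 : (c.sum fun p a => a * σ ((∑ j, p.1 j * x.1 j) + p.2)) = f x := by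
      rw [← hc, Finsupp.sum, Finsupp.sum, ContinuousMap.coe_sum, Finset.sum_apply]
      rfl
    rw [h2]
    exact h1
  choose c hc using happ
  classical
  let T : Finset ((Fin m → ℝ) × ℝ) := Finset.univ.biUnion fun i => (c i).support
  refine ⟨_, isNN_fintype (ι := T) σ (fun p => p.1.1) (fun p => p.1.2) (fun i p => c i p.1), ?_⟩
  intro x i
  convert hc i x using 3
  rw [Finsupp.sum_of_support_subset (s := T) _ (by
    intro p hp
    exact Finset.mem_biUnion.2 ⟨i, Finset.mem_univ _, hp⟩) _ (by simp)]
  exact Finset.sum_coe_sort T (fun p => c i p * σ ((∑ j, p.1 j * x.1 j) + p.2))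

lemma sum_pert {N : ℕ} (a a' b b' x y : Fin N → ℝ) (ρ C : ℝ)
    (ha : ∀ i, |a i - a' i| ≤ ρ) (hb : ∀ i, |b i - b' i| ≤ ρ)
    (hx : ∀ i, x i ∈ Set.Icc 0 C) (hy : ∀ i, y i ∈ Set.Icc 0 C) :
    |∑ i, (a i * x i - b i * y i) - ∑ i, (a' i * x i - b' i * y i)| ≤ 2 * N * ρ * C := by
  rw [← Finset.sum_sub_distrib]
  refine (Finset.abs_sum_le_sum_abs _ _).trans ?_
  have : ∀ i ∈ (Finset.univ : Finset (Fin N)),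
      |a i * x i - b i * y i - (a' i * x i - b' i * y i)| ≤ 2 * ρ * C := by
    intro i _
    have e : a i * x i - b i * y i - (a' i * x i - b' i * y i)
      = (a i - a' i) * x i - (b i - b' i) * y i := by ring
    rw [e]
    refine (abs_sub _ _).trans ?_
    rw [abs_mul, abs_mul, abs_of_nonneg (hx i).1, abs_of_nonneg (hy i).1]
    have hρ : 0 ≤ ρ := (abs_nonneg _).trans (ha i)
    have h1 := mul_le_mul (ha i) (hx i).2 (hx i).1 hρ
    have h2 := mul_le_mul (hb i) (hy i).2 (hy i).1 hρ
    linarith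
  refine (Finset.sum_le_sum this).trans (le_of_eq ?_)
  simp
  ring

lemma sum_pert2 {N : ℕ} (a b x y x' y' e : Fin N → ℝ) (H : ℝ)
    (ha : ∀ i, a i ∈ Set.Icc 0 H) (hb : ∀ i, b i ∈ Set.Icc 0 H)
    (he : ∀ i, |x i - x' i| + |y i - y' i| ≤ e i) :
    |∑ i, (a i * x i - b i * y i) - ∑ i, (a i * x' i - b i * y' i)| ≤ ∑ i, H * e i := by
  rw [← Finset.sum_sub_distrib]
  refine (Finset.abs_sum_le_sum_abs _ _).trans (Finset.sum_le_sum fun i _ => ?_)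
  have e1 : a i * x i - b i * y i - (a i * x' i - b i * y' i)
      = a i * (x i - x' i) - b i * (y i - y' i) := by ring
  rw [e1]
  refine (abs_sub _ _).trans ?_
  rw [abs_mul, abs_mul, abs_of_nonneg (ha i).1, abs_of_nonneg (hb i).1]
  have hH : 0 ≤ H := (ha i).1.trans (ha i).2
  have h1 := mul_le_mul_of_nonneg_right (ha i).2 (abs_nonneg (x i - x' i))
  have h2 := mul_le_mul_of_nonneg_right (hb i).2 (abs_nonneg (y i - y' i))
  have h3 := mul_le_mul_of_nonneg_left (he i) hH
  linarith

lemma payoff_eq {d N : ℕ} (Ψ : Fin N → (Fin d → ℝ) → ℝ → ℝ) (K : Fin N → ℝ)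
    (S : Fin d → ℝ) (q : ℝ × (Fin N → ℝ) × (Fin N → ℝ)) :
    payoffI Ψ K S q = q.1 + ∑ i, (q.2.1 i * Ψ i S (K i) - q.2.2 i * Ψ i S (K i)) := by
  simp [payoffI, sub_mul]

lemma payoff_comb {d N : ℕ} (Ψ : Fin N → (Fin d → ℝ) → ℝ → ℝ) (K : Fin N → ℝ)
    (S : Fin d → ℝ) (O P : Fin (1 + N + N) → ℝ) (a b : ℝ) :
    payoffI Ψ K S (outStrat (a • O + b • P))
      = a * payoffI Ψ K S (outStrat O) + b * payoffI Ψ K S (outStrat P) := by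
  simp only [payoffI, outStrat, Pi.add_apply, Pi.smul_apply, smul_eq_mul, mul_add, Finset.mul_sum]
  have : ∀ a b c d : ℝ, a + b + (c + d) = (a + c) + (b + d) := by intros; ring
  rw [this, ← Finset.sum_add_distrib]
  congr 1
  exact Finset.sum_congr rfl fun i _ => by ring

lemma price_comb {N : ℕ} (πp πm : Fin N → ℝ) (O P : Fin (1 + N + N) → ℝ) (a b : ℝ) :
    priceF πp πm (outStrat (a • O + b • P))
      = a * priceF πp πm (outStrat O) + b * priceF πp πm (outStrat P) := by
  simp only [priceF, outStrat, Pi.add_apply, Pi.smul_apply, smul_eq_mul, mul_add, Finset.mul_sum]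
  have : ∀ a b c d : ℝ, a + b + (c + d) = (a + c) + (b + d) := by intros; ring
  rw [this, ← Finset.sum_add_distrib]
  congr 1
  exact Finset.sum_congr rfl fun i _ => by ring

lemma outStrat_surj {N : ℕ} (q : ℝ × (Fin N → ℝ) × (Fin N → ℝ)) :
    ∃ O : Fin (1 + N + N) → ℝ, outStrat O = q := by
  refine ⟨Fin.append (Fin.append (fun _ : Fin 1 => q.1) q.2.1) q.2.2, ?_⟩
  have h0 : (⟨0, by omega⟩ : Fin (1 + N + N)) = Fin.castAdd N (Fin.castAdd N (0 : Fin 1)) := rfl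
  have h1 : ∀ i : Fin N, (⟨1 + i.1, by have := i.isLt; omega⟩ : Fin (1 + N + N))
      = Fin.castAdd N (Fin.natAdd 1 i) := fun i => rfl
  have h2 : ∀ i : Fin N, (⟨1 + N + i.1, by have := i.isLt; omega⟩ : Fin (1 + N + N))
      = Fin.natAdd (1 + N) i := fun i => rfl
  simp only [outStrat, h0, h1, h2, Fin.append_left, Fin.append_right]

lemma clamp_close (H η x : ℝ) (hη : 0 ≤ η) (hH : η ≤ H - η) (hx : x ∈ Set.Icc 0 H) :
    max η (min (H - η) x) ∈ Set.Icc η (H - η) ∧ |max η (min (H - η) x) - x| ≤ η := by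
  obtain ⟨h0, h1⟩ := hx
  refine ⟨⟨le_max_left _ _, max_le hH (min_le_left _ _)⟩, ?_⟩
  rcases le_total (H - η) x with h | h
  · rw [min_eq_left h, max_eq_right hH, abs_le]; constructor <;> linarith
  · rw [min_eq_right h]
    rcases le_total η x with h' | h'
    · rw [max_eq_right h', abs_le]; constructor <;> linarith
    · rw [max_eq_left h', abs_le]; constructor <;> linarith

lemma exists_net {d N : ℕ} (σ : ℝ → ℝ) (hσcont : Continuous σ)
    (hσnonpoly : ¬ ∃ p : Polynomial ℝ, ∀ t : ℝ, σ t = p.eval t)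
    (𝒮 : Set (Fin d → ℝ)) (Ψ : Fin N → (Fin d → ℝ) → ℝ → ℝ)
    (Kbar πbar Hbar C : ℝ) (LΨ : NNReal) (aLow : ℝ)
    (hπbar : 0 < πbar) (hHbar : 0 < Hbar) (haLow : aLow ≤ 0) (hC : 0 ≤ C)
    (hΨLip : ∀ i : Fin N, ∀ S ∈ 𝒮, LipschitzOnWith LΨ (Ψ i S) (Set.Icc 0 Kbar))
    (hΨbd : ∀ i : Fin N, ∀ S ∈ 𝒮, ∀ k ∈ Set.Icc (0 : ℝ) Kbar, Ψ i S k ∈ Set.Icc 0 C)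
    (γ : ℝ) (hγ : 0 < γ) :
      ∃ F : (Fin (N + N + N) → ℝ) → (Fin (1 + N + N) → ℝ),
        IsNN σ (N + N + N) (1 + N + N) F ∧
        ∀ K πp πm : Fin N → ℝ,
          (∀ i, K i ∈ Set.Icc 0 Kbar) → (∀ i, πp i ∈ Set.Icc 0 πbar) →
          (∀ i, πm i ∈ Set.Icc 0 πbar) →
          outStrat (F (Fin.append (Fin.append K πp) πm)) ∈ feasSet 𝒮 Ψ aLow Hbar K ∧
          ∀ q ∈ feasSet 𝒮 Ψ aLow Hbar K,
            priceF πp πm (outStrat (F (Fin.append (Fin.append K πp) πm)))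
              ≤ priceF πp πm q + γ := by
  let kz : (Fin (N + N + N) → ℝ) → Fin N → ℝ := fun z i => z (Fin.castAdd N (Fin.castAdd N i))
  let pz : (Fin (N + N + N) → ℝ) → Fin N → ℝ := fun z i => z (Fin.castAdd N (Fin.natAdd N i))
  let mz : (Fin (N + N + N) → ℝ) → Fin N → ℝ := fun z i => z (Fin.natAdd (N + N) i)
  let X : Set (Fin (N + N + N) → ℝ) := Set.univ.pi fun j => Set.Icc 0
    ((Fin.append (Fin.append (fun _ : Fin N => Kbar) (fun _ : Fin N => πbar))
      (fun _ : Fin N => πbar)) j)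
  have hX : IsCompact X := isCompact_univ_pi fun j => isCompact_Icc
  have hk : ∀ z ∈ X, ∀ i, kz z i ∈ Set.Icc 0 Kbar := fun z hz i => by
    have := hz (Fin.castAdd N (Fin.castAdd N i)) trivial
    simpa only [Fin.append_left, Fin.append_right] using this
  have hp : ∀ z ∈ X, ∀ i, pz z i ∈ Set.Icc 0 πbar := fun z hz i => by
    have := hz (Fin.castAdd N (Fin.natAdd N i)) trivial
    simpa only [Fin.append_left, Fin.append_right] using this
  have hm : ∀ z ∈ X, ∀ i, mz z i ∈ Set.Icc 0 πbar := fun z hz i => by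
    have := hz (Fin.natAdd (N + N) i) trivial
    simpa only [Fin.append_left, Fin.append_right] using this
  -- choice of the margin
  have hN : (0:ℝ) ≤ N := Nat.cast_nonneg N
  let D : ℝ := 2 + 2 * N * C + 2 * N * πbar
  have hNC : 0 ≤ N * C := mul_nonneg hN hC
  have hNπ : 0 ≤ N * πbar := mul_nonneg hN hπbar.le
  have hD : 0 < D := by simp only [D]; nlinarith
  let η : ℝ := min (Hbar / 2) (γ / 8 / D)
  have hη : 0 < η := lt_min (by linarith) (by positivity)
  have hηH : η ≤ Hbar - η := by
    have : η ≤ Hbar / 2 := min_le_left _ _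
    linarith
  have hηD : η * D ≤ γ / 8 := by
    have : η ≤ γ / 8 / D := min_le_right _ _
    rwa [le_div_iff₀ hD] at this
  let ρ : ℝ := min η (γ / 2) / D
  have hρ : 0 < ρ := div_pos (lt_min hη (by linarith)) hD
  have hρD : ρ * D = min η (γ / 2) := div_mul_cancel₀ _ hD.ne'
  have hρ1 : ρ * D ≤ η := hρD.trans_le (min_le_left _ _)
  have hρ2 : ρ * D ≤ γ / 2 := hρD.trans_le (min_le_right _ _)
  have hρη : ρ ≤ η := by
    refine le_trans ?_ hρ1
    have : 1 ≤ D := by simp only [D]; nlinarith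
    nlinarith
  let t : X → Set (Fin (1 + N + N) → ℝ) := fun z => {O |
    (aLow + η ≤ (outStrat O).1 ∧ (∀ i, (outStrat O).2.1 i ∈ Set.Icc η (Hbar - η)) ∧
      (∀ i, (outStrat O).2.2 i ∈ Set.Icc η (Hbar - η)) ∧
      ∀ S ∈ 𝒮, η ≤ payoffI Ψ (kz z) S (outStrat O)) ∧
    ∀ q ∈ feasSet 𝒮 Ψ aLow Hbar (kz z),
      priceF (pz z) (mz z) (outStrat O) ≤ priceF (pz z) (mz z) q + γ / 2}
  have hconv : ∀ z, Convex ℝ (t z) := by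
    intro z O hO P hP a b ha hb hab
    obtain ⟨⟨o1, o2, o3, o4⟩, o5⟩ := hO
    obtain ⟨⟨p1, p2, p3, p4⟩, p5⟩ := hP
    have hcomb : ∀ l x y : ℝ, l ≤ x → l ≤ y → l ≤ a * x + b * y := by
      intro l x y hx hy
      have h1 := mul_le_mul_of_nonneg_left hx ha
      have h2 := mul_le_mul_of_nonneg_left hy hb
      have h3 : a * l + b * l = l := by rw [← add_mul, hab, one_mul]
      linarith
    have hcomb2 : ∀ l x y : ℝ, x ≤ l → y ≤ l → a * x + b * y ≤ l := by
      intro l x y hx hy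
      have h1 := mul_le_mul_of_nonneg_left hx ha
      have h2 := mul_le_mul_of_nonneg_left hy hb
      have h3 : a * l + b * l = l := by rw [← add_mul, hab, one_mul]
      linarith
    refine ⟨⟨hcomb _ _ _ o1 p1, fun i => ⟨hcomb _ _ _ (o2 i).1 (p2 i).1,
      hcomb2 _ _ _ (o2 i).2 (p2 i).2⟩, fun i => ⟨hcomb _ _ _ (o3 i).1 (p3 i).1,
      hcomb2 _ _ _ (o3 i).2 (p3 i).2⟩, fun S hS => ?_⟩, fun q hq => ?_⟩
    · rw [payoff_comb]
      exact hcomb _ _ _ (o4 S hS) (p4 S hS)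
    · rw [price_comb]
      exact hcomb2 _ _ _ (o5 q hq) (p5 q hq)
  have hloc : ∀ z : X, ∃ c, ∀ᶠ y in 𝓝 z, c ∈ t y := by
    intro z0
    -- near-optimal strategy
    obtain ⟨q, hq, hqopt⟩ : ∃ q ∈ feasSet 𝒮 Ψ aLow Hbar (kz z0),
        ∀ q' ∈ feasSet 𝒮 Ψ aLow Hbar (kz z0),
          priceF (pz z0) (mz z0) q ≤ priceF (pz z0) (mz z0) q' + γ / 4 := by
      let P : Set ℝ := priceF (pz z0) (mz z0) '' feasSet 𝒮 Ψ aLow Hbar (kz z0)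
      have hne : P.Nonempty := by
        refine ⟨_, (0, fun _ => 0, fun _ => 0), ?_, rfl⟩
        refine ⟨haLow, fun i => ⟨le_rfl, hHbar.le⟩, fun i => ⟨le_rfl, hHbar.le⟩, fun S hS => ?_⟩
        simp [payoffI]
      have hbd : BddBelow P := by
        refine ⟨aLow + ∑ i : Fin N, (-(Hbar * πbar)), ?_⟩
        rintro _ ⟨q', ⟨h1, h2, h3, _⟩, rfl⟩
        refine add_le_add h1 (Finset.sum_le_sum fun i _ => ?_)
        have e1 := mul_nonneg (h2 i).1 (hp z0 z0.2 i).1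
        have e2 := mul_le_mul (h3 i).2 (hm z0 z0.2 i).2 (hm z0 z0.2 i).1 hHbar.le
        linarith
      obtain ⟨_, ⟨q, hq, rfl⟩, hlt⟩ := exists_lt_of_csInf_lt hne
        (show sInf P < sInf P + γ / 4 by linarith)
      refine ⟨q, hq, fun q' hq' => ?_⟩
      have : sInf P ≤ priceF (pz z0) (mz z0) q' := csInf_le hbd ⟨q', hq', rfl⟩
      linarith
    obtain ⟨hq1, hq2, hq3, hq4⟩ := hq
    let c : ℝ × (Fin N → ℝ) × (Fin N → ℝ) := (q.1 + (2 * N * C * η + 2 * η),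
      fun i => max η (min (Hbar - η) (q.2.1 i)), fun i => max η (min (Hbar - η) (q.2.2 i)))
    obtain ⟨O, hO⟩ := outStrat_surj c
    refine ⟨O, ?_⟩
    have hcp := fun i => clamp_close Hbar η (q.2.1 i) hη.le hηH (hq2 i)
    have hcm := fun i => clamp_close Hbar η (q.2.2 i) hη.le hηH (hq3 i)
    have hcp' : ∀ i, c.2.1 i ∈ Set.Icc 0 Hbar := fun i =>
      ⟨hη.le.trans (hcp i).1.1, (hcp i).1.2.trans (by linarith)⟩
    have hcm' : ∀ i, c.2.2 i ∈ Set.Icc 0 Hbar := fun i =>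
      ⟨hη.le.trans (hcm i).1.1, (hcm i).1.2.trans (by linarith)⟩
    -- modulus
    let ω1 : (Fin (N + N + N) → ℝ) → ℝ := fun z => ∑ i, Hbar * (2 * (LΨ * |kz z i - kz z0 i|))
    let ω2 : (Fin (N + N + N) → ℝ) → ℝ := fun z =>
      ∑ i, Hbar * (|pz z i - pz z0 i| + |mz z i - mz z0 i|)
    have hω1c : Continuous ω1 := by simp only [ω1, kz]; fun_prop
    have hω2c : Continuous ω2 := by simp only [ω2, pz, mz]; fun_prop
    have hω10 : ω1 z0 = 0 := by simp [ω1]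
    have hω20 : ω2 z0 = 0 := by simp [ω2]
    have hω1 : ∀ᶠ y : X in 𝓝 z0, ω1 y < min η (γ / 16) := by
      have : ContinuousAt (fun y : X => ω1 y) z0 :=
        (hω1c.comp continuous_subtype_val).continuousAt
      refine this.eventually_lt_const ?_
      simp only [hω10]
      exact lt_min hη (by linarith)
    have hω2 : ∀ᶠ y : X in 𝓝 z0, ω2 y < γ / 32 := by
      have : ContinuousAt (fun y : X => ω2 y) z0 :=
        (hω2c.comp continuous_subtype_val).continuousAt
      refine this.eventually_lt_const ?_
      simp only [hω20]
      linarith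
    filter_upwards [hω1, hω2] with y hy1 hy2
    have hy1a := hy1.trans_le (min_le_left _ _)
    have hy1b := hy1.trans_le (min_le_right _ _)
    have hpay : ∀ r : ℝ × (Fin N → ℝ) × (Fin N → ℝ), (∀ i, r.2.1 i ∈ Set.Icc 0 Hbar) →
        (∀ i, r.2.2 i ∈ Set.Icc 0 Hbar) → ∀ S ∈ 𝒮,
        |payoffI Ψ (kz y) S r - payoffI Ψ (kz z0) S r| ≤ ω1 y := by
      intro r h1 h2 S hS
      rw [payoff_eq, payoff_eq, add_sub_add_left_eq_sub]
      refine sum_pert2 _ _ _ _ _ _ _ Hbar h1 h2 fun i => ?_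
      have := (hΨLip i S hS).dist_le_mul _ (hk y y.2 i) _ (hk z0 z0.2 i)
      rw [Real.dist_eq, Real.dist_eq] at this
      linarith
    have hpri : ∀ r : ℝ × (Fin N → ℝ) × (Fin N → ℝ), (∀ i, r.2.1 i ∈ Set.Icc 0 Hbar) →
        (∀ i, r.2.2 i ∈ Set.Icc 0 Hbar) →
        |priceF (pz y) (mz y) r - priceF (pz z0) (mz z0) r| ≤ ω2 y := by
      intro r h1 h2
      rw [priceF, priceF, add_sub_add_left_eq_sub]
      exact sum_pert2 _ _ _ _ _ _ _ Hbar h1 h2 fun i => le_rfl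
    change _ ∧ _
    rw [hO]
    refine ⟨⟨?_, fun i => (hcp i).1, fun i => (hcm i).1, fun S hS => ?_⟩, fun q' hq' => ?_⟩
    · change aLow + η ≤ q.1 + (2 * N * C * η + 2 * η)
      nlinarith
    · have e1 := abs_le.1 (hpay c hcp' hcm' S hS)
      have e2 : payoffI Ψ (kz z0) S q + 2 * η ≤ payoffI Ψ (kz z0) S c := by
        have := abs_le.1 (sum_pert c.2.1 q.2.1 c.2.2 q.2.2 (fun i => Ψ i S (kz z0 i))
          (fun i => Ψ i S (kz z0 i)) η C (fun i => (hcp i).2) (fun i => (hcm i).2)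
          (fun i => hΨbd i S hS _ (hk z0 z0.2 i)) (fun i => hΨbd i S hS _ (hk z0 z0.2 i)))
        rw [payoff_eq, payoff_eq]
        have hc1 : c.1 = q.1 + (2 * N * C * η + 2 * η) := rfl
        rw [hc1]
        linarith [this.1]
      linarith [hq4 S hS, e1.1]
    · obtain ⟨f1, f2, f3, f4⟩ := hq'
      have hω1n : 0 ≤ ω1 y := Finset.sum_nonneg fun i _ => by positivity
      have e1 := abs_le.1 (hpri c hcp' hcm')
      have e2 := abs_le.1 (hpri q' f2 f3)
      have e3 : priceF (pz z0) (mz z0) c ≤ priceF (pz z0) (mz z0) q + η * D := by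
        have := abs_le.1 (sum_pert c.2.1 q.2.1 c.2.2 q.2.2 (pz z0) (mz z0)
          η πbar (fun i => (hcp i).2) (fun i => (hcm i).2) (hp z0 z0.2) (hm z0 z0.2))
        rw [priceF, priceF]
        have hc1 : c.1 = q.1 + (2 * N * C * η + 2 * η) := rfl
        rw [hc1]
        simp only [D]
        linarith [this.2]
      have e4 := hqopt (q'.1 + ω1 y, q'.2.1, q'.2.2) ⟨by
          change aLow ≤ q'.1 + ω1 y
          linarith, f2, f3, fun S hS => by
          have g1 := abs_le.1 (hpay q' f2 f3 S hS)
          have g2 := f4 S hS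
          have g3 : payoffI Ψ (kz z0) S (q'.1 + ω1 y, q'.2.1, q'.2.2)
            = payoffI Ψ (kz z0) S q' + ω1 y := by simp only [payoffI]; ring
          rw [g3]
          linarith [g1.2]⟩
      have e5 : priceF (pz z0) (mz z0) (q'.1 + ω1 y, q'.2.1, q'.2.2)
            = priceF (pz z0) (mz z0) q' + ω1 y := by simp only [priceF]; ring
      rw [e5] at e4
      linarith [e1.2, e2.1]
  obtain ⟨g, hg⟩ := exists_continuous_forall_mem_convex_of_local_const hconv hloc
  obtain ⟨F, hF, hFg⟩ := uat X hX σ hσcont hσnonpoly g ρ hρ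
  refine ⟨F, hF, fun K πp πm hK hπp hπm => ?_⟩
  let z : Fin (N + N + N) → ℝ := Fin.append (Fin.append K πp) πm
  have hzk : kz z = K := by
    funext i; simp only [kz, z, Fin.append_left, Fin.append_right]
  have hzp : pz z = πp := by
    funext i; simp only [pz, z, Fin.append_left, Fin.append_right]
  have hzm : mz z = πm := by
    funext i; simp only [mz, z, Fin.append_left, Fin.append_right]
  have hz : z ∈ X := by
    intro j _
    refine Fin.addCases (fun j => Fin.addCases (fun i => ?_) (fun i => ?_) j) (fun i => ?_) j
    · simpa only [z, Fin.append_left, Fin.append_right] using hπm i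
    · simpa only [z, Fin.append_left, Fin.append_right] using hK i
    · simpa only [z, Fin.append_left, Fin.append_right] using hπp i
  obtain ⟨⟨g1, g2, g3, g4⟩, g5⟩ := hg ⟨z, hz⟩
  have hc := hFg ⟨z, hz⟩
  change outStrat (F z) ∈ _ ∧ ∀ q ∈ _, priceF πp πm (outStrat (F z)) ≤ _
  simp only [hzk, hzp, hzm] at g4 g5
  generalize hG : outStrat (g ⟨z, hz⟩) = G at *
  have d1 : |(outStrat (F z)).1 - G.1| ≤ ρ := by rw [← hG]; exact hc _
  have d2 : ∀ i, |(outStrat (F z)).2.1 i - G.2.1 i| ≤ ρ := by rw [← hG]; exact fun i => hc _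
  have d3 : ∀ i, |(outStrat (F z)).2.2 i - G.2.2 i| ≤ ρ := by rw [← hG]; exact fun i => hc _
  have d1' := abs_le.1 d1
  have hρC : 0 ≤ ρ * (N * C) := by positivity
  have hρπ : 0 ≤ ρ * (N * πbar) := by positivity
  refine ⟨⟨by linarith [d1'.1], fun i => ?_, fun i => ?_, fun S hS => ?_⟩, fun q hq => ?_⟩
  · have := abs_le.1 (d2 i)
    exact ⟨by linarith [this.1, (g2 i).1], by linarith [this.2, (g2 i).2]⟩
  · have := abs_le.1 (d3 i)
    exact ⟨by linarith [this.1, (g3 i).1], by linarith [this.2, (g3 i).2]⟩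
  · have := abs_le.1 (sum_pert (outStrat (F z)).2.1 G.2.1 (outStrat (F z)).2.2 G.2.2
      (fun i => Ψ i S (K i)) (fun i => Ψ i S (K i)) ρ C d2 d3
      (fun i => hΨbd i S hS _ (hK i)) (fun i => hΨbd i S hS _ (hK i)))
    have h4 := g4 S hS
    rw [payoff_eq] at h4 ⊢
    simp only [D] at hρ1
    linarith [this.1, d1'.1]
  · have := abs_le.1 (sum_pert (outStrat (F z)).2.1 G.2.1 (outStrat (F z)).2.2 G.2.2
      πp πm ρ πbar d2 d3 hπp hπm)
    have h5 := g5 q hq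
    rw [priceF] at h5 ⊢
    simp only [D] at hρ2
    linarith [this.2, d1'.2]

end Helpers

/-- Theorem 2.6: for every `ε > 0` and `0 < δ < ε` there is a single neural
network which, for all market parameters `(K,π)` in the prescribed bounds, outputs a feasible
strategy that is a static arbitrage of magnitude `δ` whenever the market admits static
arbitrage of magnitude `ε`, and has price at most `ε − δ` whenever the market is
arbitrage-free. -/
theorem stmt15 {d N : ℕ} (σ : ℝ → ℝ) (hσcont : Continuous σ)
    (hσnonpoly : ¬ ∃ p : Polynomial ℝ, ∀ t : ℝ, σ t = p.eval t)
    (𝒮 : Set (Fin d → ℝ)) (Ψ : Fin N → (Fin d → ℝ) → ℝ → ℝ)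
    (Kbar πbar Hbar CΨ : ℝ) (LΨ : NNReal) (aLow : ℝ)
    (hKbar : 0 < Kbar) (hπbar : 0 < πbar) (hHbar : 0 < Hbar) (haLow : aLow ≤ 0)
    (hΨLip : ∀ i : Fin N, ∀ S ∈ 𝒮, LipschitzOnWith LΨ (Ψ i S) (Set.Icc 0 Kbar))
    (hΨbd : ∀ i : Fin N, ∀ S ∈ 𝒮, ∀ k ∈ Set.Icc (0 : ℝ) Kbar,
      0 ≤ Ψ i S k ∧ Ψ i S k ≤ CΨ) :
    ∀ ε δ : ℝ, 0 < δ → δ < ε →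
      ∃ F : (Fin (N + N + N) → ℝ) → (Fin (1 + N + N) → ℝ),
        IsNN σ (N + N + N) (1 + N + N) F ∧
        ∀ K πp πm : Fin N → ℝ,
          (∀ i, K i ∈ Set.Icc 0 Kbar) → (∀ i, πp i ∈ Set.Icc 0 πbar) →
          (∀ i, πm i ∈ Set.Icc 0 πbar) →
          ((∃ q ∈ feasSet 𝒮 Ψ aLow Hbar K, priceF πp πm q ≤ -ε) →
            outStrat (F (Fin.append (Fin.append K πp) πm)) ∈ feasSet 𝒮 Ψ aLow Hbar K ∧
            priceF πp πm (outStrat (F (Fin.append (Fin.append K πp) πm))) ≤ -δ) ∧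
          ((∀ q ∈ feasSet 𝒮 Ψ aLow Hbar K, 0 ≤ priceF πp πm q) →
            outStrat (F (Fin.append (Fin.append K πp) πm)) ∈ feasSet 𝒮 Ψ aLow Hbar K ∧
            priceF πp πm (outStrat (F (Fin.append (Fin.append K πp) πm))) ≤ ε - δ) := by
  intro ε δ hδ hδε
  obtain ⟨F, hF, h⟩ := exists_net σ hσcont hσnonpoly 𝒮 Ψ Kbar πbar Hbar (max CΨ 0) LΨ aLow
    hπbar hHbar haLow (le_max_right _ _) hΨLip
    (fun i S hS k hk => ⟨(hΨbd i S hS k hk).1, (hΨbd i S hS k hk).2.trans (le_max_left _ _)⟩)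
    (ε - δ) (by linarith)
  refine ⟨F, hF, fun K πp πm hK hπp hπm => ?_⟩
  obtain ⟨h1, h2⟩ := h K πp πm hK hπp hπm
  refine ⟨fun ⟨q, hq, hqp⟩ => ⟨h1, by linarith [h2 q hq]⟩, fun _ => ⟨h1, ?_⟩⟩
  have h0 : ((0 : ℝ), (fun _ : Fin N => (0:ℝ)), (fun _ : Fin N => (0:ℝ)))
      ∈ feasSet 𝒮 Ψ aLow Hbar K := by
    refine ⟨haLow, fun i => ⟨le_rfl, hHbar.le⟩, fun i => ⟨le_rfl, hHbar.le⟩, fun S hS => ?_⟩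
    simp [payoffI]
  have := h2 _ h0
  have e : priceF πp πm ((0 : ℝ), (fun _ : Fin N => (0:ℝ)), (fun _ : Fin N => (0:ℝ))) = 0 := by
    simp [priceF]
  linarith
end
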